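/- arXiv:quant-ph/0703033 — 2 statements merged into one kernel-verified Lean document; each statement's English description precedes it below -/
import Mathlib

section
/- (Forward direction of Lemma 1, bipartite form.) Let a_1, …, a_k be pairwise commuting unitary matrices on ℂ^{D₁} and b_1, …, b_k pairwise commuting unitary matrices on ℂ^{D₂}, with a_i^d = I and b_i^d = I for all i. Set g_i = a_i ⊗ b_i on ℂ^{D₁} ⊗ ℂ^{D₂} and let P_S = ∏_{i=1}^k (1/d) ∑_{j=0}^{d−1} g_i^j be the projection onto the subspace stabilized by g_1,…,g_k. If P_S ≠ 0, then the maximally mixed state ρ_S = P_S / tr(P_S) is separable across the cut ℂ^{D₁} : ℂ^{D₂}, i.e., there exist finitely many weights p_t > 0 with ∑_t p_t = 1 and unit vectors u_t ∈ ℂ^{D₁}, v_t ∈ ℂ^{D₂} such that ρ_S = ∑_t p_t (|u_t⟩⟨u_t|) ⊗ (|v_t⟩⟨v_t|). -/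
open Matrix Kronecker

/-- A family of pairwise commuting Hermitian matrices has an orthonormal basis of joint
eigenvectors. -/
theorem exists_orthonormalBasis_mulVec_eq_smul_of_isHermitian {ι : Type*} {n : ℕ}
    (A : ι → Matrix (Fin n) (Fin n) ℂ) (hA : ∀ i, (A i).IsHermitian)
    (hC : ∀ i j, Commute (A i) (A j)) :
    ∃ (u : OrthonormalBasis (Fin n) ℂ (EuclideanSpace ℂ (Fin n))) (μ : ι → Fin n → ℂ),
      ∀ i s, A i *ᵥ (u s).ofLp = μ i s • (u s).ofLp := by
  classical
  have hT : ∀ i, (Matrix.toEuclideanLin (A i)).IsSymmetric := fun i =>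
    isSymmetric_toEuclideanLin_iff.mpr (hA i)
  have hTC : Pairwise (Function.onFun Commute fun i => Matrix.toEuclideanLin (A i)) := by
    intro i j _
    refine LinearMap.ext fun x => ?_
    have h := congrArg (fun M => WithLp.toLp 2 (M *ᵥ x.ofLp)) (hC i j).eq
    simpa [Matrix.toLpLin_apply, Matrix.mulVec_mulVec] using h
  have hI := LinearMap.IsSymmetric.directSum_isInternal_of_pairwise_commute hT hTC
  have hO := LinearMap.IsSymmetric.orthogonalFamily_iInf_eigenspaces hT
  let _ := hI.submodule_iSupIndep.fintypeNeBotOfFiniteDimensional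
  have hI' := DirectSum.isInternal_ne_bot_iff.mpr hI
  have hO' := hO.comp (Subtype.val_injective
    (p := fun γ : ι → ℂ => (⨅ j, Module.End.eigenspace (Matrix.toEuclideanLin (A j)) (γ j)) ≠ ⊥))
  have hn : Module.finrank ℂ (EuclideanSpace ℂ (Fin n)) = n := by simp
  refine ⟨hI'.subordinateOrthonormalBasis hn hO',
    fun i s => (hI'.subordinateOrthonormalBasisIndex hn s hO').1 i, fun i s => ?_⟩
  have hmem := hI'.subordinateOrthonormalBasis_subordinate hn s hO'
  have h := Module.End.mem_eigenspace_iff.mp ((Submodule.mem_iInf _).mp hmem i)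
  exact congrArg WithLp.ofLp h

theorem isHermitian_I_smul_sub_conjTranspose {n : Type*} (A : Matrix n n ℂ) :
    (Complex.I • (A - Aᴴ)).IsHermitian := by
  rw [Matrix.IsHermitian, conjTranspose_smul, conjTranspose_sub, conjTranspose_conjTranspose,
    Complex.star_def, Complex.conj_I, neg_smul, ← smul_neg, neg_sub]

/-- A family of pairwise commuting unitary matrices has an orthonormal basis of joint
eigenvectors. -/
theorem exists_orthonormalBasis_mulVec_eq_smul_of_unitary {ι : Type*} {n : ℕ}
    (a : ι → Matrix (Fin n) (Fin n) ℂ) (hU : ∀ i, a i * (a i)ᴴ = 1 ∧ (a i)ᴴ * a i = 1)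
    (hC : ∀ i j, a i * a j = a j * a i) :
    ∃ (u : OrthonormalBasis (Fin n) ℂ (EuclideanSpace ℂ (Fin n))) (μ : ι → Fin n → ℂ),
      ∀ i s, a i *ᵥ (u s).ofLp = μ i s • (u s).ofLp := by
  have hcc : ∀ i j, Commute (a i) (a j) := hC
  have hcs : ∀ i j, Commute (a i) (a j)ᴴ := fun i j => by
    let w : (Matrix (Fin n) (Fin n) ℂ)ˣ := ⟨a j, (a j)ᴴ, (hU j).1, (hU j).2⟩
    exact Commute.units_inv_right (u := w) (hcc i j)
  have hsc : ∀ i j, Commute (a i)ᴴ (a j) := fun i j => (hcs j i).symm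
  have hss : ∀ i j, Commute (a i)ᴴ (a j)ᴴ := fun i j => (hcc i j).star_star
  let A : ι ⊕ ι → Matrix (Fin n) (Fin n) ℂ :=
    Sum.elim (fun i => a i + (a i)ᴴ) (fun i => Complex.I • (a i - (a i)ᴴ))
  obtain ⟨u, μ, h⟩ := exists_orthonormalBasis_mulVec_eq_smul_of_isHermitian A
    (by
      rintro (i | i)
      · exact isHermitian_add_transpose_self (a i)
      · exact isHermitian_I_smul_sub_conjTranspose (a i))
    (by
      have hp : ∀ i j, Commute (a i + (a i)ᴴ) (a j) := fun i j =>
        (hcc i j).add_left (hsc i j)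
      have hps : ∀ i j, Commute (a i + (a i)ᴴ) (a j)ᴴ := fun i j =>
        (hcs i j).add_left (hss i j)
      have hm : ∀ i j, Commute (a i - (a i)ᴴ) (a j) := fun i j =>
        (hcc i j).sub_left (hsc i j)
      have hms : ∀ i j, Commute (a i - (a i)ᴴ) (a j)ᴴ := fun i j =>
        (hcs i j).sub_left (hss i j)
      rintro (i | i) (j | j)
      · exact (hp i j).add_right (hps i j)
      · exact ((hp i j).sub_right (hps i j)).smul_right _
      · exact ((hm i j).add_right (hms i j)).smul_left _
      · exact (((hm i j).sub_right (hms i j)).smul_right _).smul_left _)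
  refine ⟨u, fun i s => (1 / 2) * (μ (.inl i) s - Complex.I * μ (.inr i) s), fun i s => ?_⟩
  have hd : a i = (1 / 2 : ℂ) • (A (.inl i) - Complex.I • A (.inr i)) := by
    simp only [A, Sum.elim_inl, Sum.elim_inr, smul_smul, Complex.I_mul_I]
    module
  rw [hd, Matrix.smul_mulVec, Matrix.sub_mulVec, Matrix.smul_mulVec, h, h]
  module

theorem OrthonormalBasis.star_dotProduct_self {n : Type*} [Fintype n]
    (u : OrthonormalBasis n ℂ (EuclideanSpace ℂ n)) (s : n) :
    star (u s).ofLp ⬝ᵥ (u s).ofLp = 1 := by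
  have h : inner ℂ (u s) (u s) = 1 := inner_self_eq_one_of_norm_eq_one (u.orthonormal.1 s)
  rwa [EuclideanSpace.inner_eq_star_dotProduct, dotProduct_comm] at h

theorem OrthonormalBasis.sum_vecMulVec_star {n : Type*} [Fintype n] [DecidableEq n]
    (u : OrthonormalBasis n ℂ (EuclideanSpace ℂ n)) :
    ∑ s, vecMulVec (u s).ofLp (star (u s).ofLp) = 1 := by
  let U : Matrix n n ℂ := Matrix.of fun x s => u s x
  have h : Uᴴ * U = 1 := by
    ext s t
    have h := (orthonormal_iff_ite.mp u.orthonormal) s t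
    rw [EuclideanSpace.inner_eq_star_dotProduct, dotProduct_comm] at h
    simpa [U, Matrix.mul_apply, dotProduct, Matrix.one_apply] using h
  rw [← mul_eq_one_comm.mp h]
  ext x y
  simp [U, Matrix.mul_apply, Matrix.sum_apply, vecMulVec_apply]

theorem List.prod_ofFn_mul_eq_prod_smul {R A : Type*} [CommSemiring R] [Semiring A] [Algebra R A]
    (X : A) : ∀ {k : ℕ} (f : Fin k → A) (c : Fin k → R), (∀ i, f i * X = c i • X) →
      (List.ofFn f).prod * X = (∏ i, c i) • X
  | 0, _, _, _ => by simp
  | k + 1, f, c, h => by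
    rw [List.ofFn_succ, List.prod_cons, mul_assoc,
      List.prod_ofFn_mul_eq_prod_smul X _ (fun i => c i.succ) fun i => h i.succ,
      mul_smul_comm, h, smul_smul, Fin.prod_univ_succ, mul_comm]

theorem pow_mul_eq_pow_smul {R A : Type*} [CommSemiring R] [Semiring A] [Algebra R A]
    {g X : A} {z : R} (h : g * X = z • X) (j : ℕ) : g ^ j * X = z ^ j • X := by
  induction j with
  | zero => simp
  | succ j ih => rw [pow_succ, mul_assoc, h, mul_smul_comm, ih, smul_smul, pow_succ, mul_comm]

theorem kronecker_pow_eq {R m n : Type*} [CommSemiring R] [Fintype m] [DecidableEq m] [Fintype n]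
    [DecidableEq n] (A : Matrix m m R) (B : Matrix n n R) (j : ℕ) :
    (A ⊗ₖ B) ^ j = (A ^ j) ⊗ₖ (B ^ j) := by
  induction j with
  | zero => simp
  | succ j ih => rw [pow_succ, ih, ← mul_kronecker_mul, pow_succ, pow_succ]

theorem inv_mul_geom_sum_of_pow_eq_one {K : Type*} [Field K] [CharZero K] {d : ℕ} (hd : 0 < d)
    {z : K} (hz : z ^ d = 1) :
    (d : K)⁻¹ * ∑ j ∈ Finset.range d, z ^ j = 0 ∨ (d : K)⁻¹ * ∑ j ∈ Finset.range d, z ^ j = 1 := by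
  by_cases h : z = 1
  · right
    have : (d : K) ≠ 0 := Nat.cast_ne_zero.mpr hd.ne'
    simp [h, this]
  · left
    rw [geom_sum_eq h, hz]
    simp

/-- Forward direction of Lemma 1, bipartite form: if `g_i = a_i ⊗ b_i` for pairwise
commuting unitaries `a_i` on `ℂ^{D₁}` and `b_i` on `ℂ^{D₂}` with `a_i^d = b_i^d = 1`,
and `P_S = ∏_i (1/d) ∑_j g_i^j ≠ 0` is the projection onto the stabilized subspace,
then the maximally mixed state `ρ_S = P_S / tr(P_S)` is separable across `ℂ^{D₁} : ℂ^{D₂}`. -/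
theorem stabilized_state_separable (D1 D2 d k : ℕ)
    (hD1 : 0 < D1) (hD2 : 0 < D2) (hd : 0 < d) (hk : 0 < k)
    (a : Fin k → Matrix (Fin D1) (Fin D1) ℂ) (b : Fin k → Matrix (Fin D2) (Fin D2) ℂ)
    (haU : ∀ i, a i * (a i)ᴴ = 1 ∧ (a i)ᴴ * a i = 1)
    (hbU : ∀ i, b i * (b i)ᴴ = 1 ∧ (b i)ᴴ * b i = 1)
    (haC : ∀ i j, a i * a j = a j * a i) (hbC : ∀ i j, b i * b j = b j * b i)
    (had : ∀ i, a i ^ d = 1) (hbd : ∀ i, b i ^ d = 1)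
    (PS : Matrix (Fin D1 × Fin D2) (Fin D1 × Fin D2) ℂ)
    (hPS : PS = (List.ofFn fun i =>
      (d : ℂ)⁻¹ • ∑ j ∈ Finset.range d, (a i ⊗ₖ b i) ^ j).prod)
    (hne : PS ≠ 0) :
    ∃ (m : ℕ) (p : Fin m → ℝ) (u : Fin m → (Fin D1 → ℂ)) (v : Fin m → (Fin D2 → ℂ)),
      (∀ t, 0 < p t) ∧ (∑ t, p t = 1) ∧
      (∀ t, star (u t) ⬝ᵥ u t = 1) ∧ (∀ t, star (v t) ⬝ᵥ v t = 1) ∧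
      PS.trace⁻¹ • PS =
        ∑ t, (p t : ℂ) •
          (vecMulVec (u t) (star (u t)) ⊗ₖ vecMulVec (v t) (star (v t))) := by
  obtain ⟨u, α, hα⟩ := exists_orthonormalBasis_mulVec_eq_smul_of_unitary a haU haC
  obtain ⟨v, β, hβ⟩ := exists_orthonormalBasis_mulVec_eq_smul_of_unitary b hbU hbC
  let X : Fin D1 × Fin D2 → Matrix (Fin D1 × Fin D2) (Fin D1 × Fin D2) ℂ := fun q =>
    vecMulVec (u q.1).ofLp (star (u q.1).ofLp) ⊗ₖ vecMulVec (v q.2).ofLp (star (v q.2).ofLp)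
  have hXsum : ∑ q, X q = 1 := by
    have h := congrArg₂ (fun M N => M ⊗ₖ N) u.sum_vecMulVec_star v.sum_vecMulVec_star
    simp only [one_kronecker_one] at h
    rw [← h, Fintype.sum_prod_type]
    ext x y
    simp [X, Matrix.sum_apply, kroneckerMap_apply, Finset.sum_mul_sum]
  have hXtr : ∀ q, (X q).trace = 1 := fun q => by
    simp only [X]
    rw [trace_kronecker, trace_vecMulVec, trace_vecMulVec, dotProduct_comm,
      u.star_dotProduct_self, dotProduct_comm, v.star_dotProduct_self, one_mul]
  have hXne : ∀ q, X q ≠ 0 := fun q h => by simpa [h] using hXtr q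
  have hgX : ∀ i q, (a i ⊗ₖ b i) * X q = (α i q.1 * β i q.2) • X q := fun i q => by
    simp only [X]
    rw [← mul_kronecker_mul, mul_vecMulVec, mul_vecMulVec, hα, hβ, smul_vecMulVec,
      smul_vecMulVec, smul_kronecker, kronecker_smul, smul_smul]
  have hgd : ∀ i, (a i ⊗ₖ b i) ^ d = 1 := fun i => by
    rw [kronecker_pow_eq, had, hbd, one_kronecker_one]
  have hroot : ∀ i (q : Fin D1 × Fin D2), (α i q.1 * β i q.2) ^ d = 1 := fun i q => by
    have h := pow_mul_eq_pow_smul (hgX i q) d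
    rw [hgd, one_mul] at h
    exact smul_left_injective ℂ (hXne q) (by simpa using h.symm)
  let c : Fin D1 × Fin D2 → ℂ := fun q =>
    ∏ i, (d : ℂ)⁻¹ * ∑ j ∈ Finset.range d, (α i q.1 * β i q.2) ^ j
  have hc : ∀ q, c q = 0 ∨ c q = 1 := fun q => by
    by_cases h : ∃ i, (d : ℂ)⁻¹ * ∑ j ∈ Finset.range d, (α i q.1 * β i q.2) ^ j = 0
    · obtain ⟨i, hi⟩ := h
      exact .inl (Finset.prod_eq_zero (Finset.mem_univ i) hi)
    · push Not at h
      exact .inr (Finset.prod_eq_one fun i _ =>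
        (inv_mul_geom_sum_of_pow_eq_one hd (hroot i q)).resolve_left (h i))
  have hPX : ∀ q, PS * X q = c q • X q := fun q => by
    rw [hPS]
    refine List.prod_ofFn_mul_eq_prod_smul (X q) _ _ fun i => ?_
    rw [smul_mul_assoc, Finset.sum_mul, mul_smul, Finset.sum_smul]
    simp only [pow_mul_eq_pow_smul (hgX i q)]
  classical
  let S : Finset (Fin D1 × Fin D2) := Finset.univ.filter fun q => c q = 1
  have hPsum : PS = ∑ q ∈ S, X q := by
    rw [← mul_one PS, ← hXsum, Finset.mul_sum, Finset.sum_filter]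
    refine Finset.sum_congr rfl fun q _ => ?_
    rcases hc q with h | h <;> simp [hPX, h]
  have hPtr : PS.trace = S.card := by
    rw [hPsum, trace_sum]
    simp [hXtr]
  have hS : 0 < S.card := by
    rw [Finset.card_pos, Finset.nonempty_iff_ne_empty]
    rintro h
    exact hne (by rw [hPsum, h, Finset.sum_empty])
  let e := S.equivFin.symm
  refine ⟨S.card, fun _ => (S.card : ℝ)⁻¹, fun t => (u (e t).1.1).ofLp,
    fun t => (v (e t).1.2).ofLp, fun _ => by positivity, ?_, fun t => u.star_dotProduct_self _,
    fun t => v.star_dotProduct_self _, ?_⟩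
  · have : (S.card : ℝ) ≠ 0 := by positivity
    simp [this]
  · rw [hPtr, ← Finset.smul_sum, hPsum, Complex.ofReal_inv, Complex.ofReal_natCast,
      ← Finset.sum_coe_sort S, ← e.sum_comp]
end

section
/- The four-qubit Smolin state ρ^(4) is separable with respect to the 2:2 partition {1,2}:{3,4}: there exist finitely many weights p_t > 0 with ∑_t p_t = 1 and unit vectors u_t, v_t ∈ ℂ²⊗ℂ² such that ρ^(4) = ∑_t p_t (|u_t⟩⟨u_t|) ⊗ (|v_t⟩⟨v_t|), where the first factor acts on qubits 1,2 and the second on qubits 3,4. -/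
open Matrix Kronecker

/-- The qubit Pauli `X = |0⟩⟨1| + |1⟩⟨0|`. -/
def qubitX : Matrix (Fin 2) (Fin 2) ℂ := !![0, 1; 1, 0]

/-- The qubit Pauli `Z = |0⟩⟨0| - |1⟩⟨1|`. -/
def qubitZ : Matrix (Fin 2) (Fin 2) ℂ := !![1, 0; 0, -1]

/-- The sign `(-1)^i` of a bit, as a complex number. -/
def bitSign (i : Fin 2) : ℂ := (-1) ^ (i : ℕ)

/-- The Bell vector `(1/√2) ∑ᵢ (-1)^(a i) |i, i + b⟩`. -/
noncomputable def bellVec (a b : Fin 2) : Fin 2 × Fin 2 → ℂ :=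
  fun x => ((√2 : ℝ) : ℂ)⁻¹ * if x.2 = x.1 + b then bitSign (a * x.1) else 0

lemma inv_sqrt_two_mul_self : ((√2 : ℝ) : ℂ)⁻¹ * ((√2 : ℝ) : ℂ)⁻¹ = 1 / 2 := by
  rw [← mul_inv, ← Complex.ofReal_mul, Real.mul_self_sqrt zero_le_two]
  norm_num

lemma star_bellVec (a b : Fin 2) : star (bellVec a b) = bellVec a b := by
  ext x
  simp only [bellVec, bitSign, Pi.star_apply]
  split_ifs <;> simp [Complex.conj_ofReal]

lemma bellVec_mul_bellVec (a b : Fin 2) (x y : Fin 2 × Fin 2) :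
    bellVec a b x * bellVec a b y =
      1 / 2 * ((if x.2 = x.1 + b then bitSign (a * x.1) else 0) *
        (if y.2 = y.1 + b then bitSign (a * y.1) else 0)) := by
  rw [bellVec, bellVec, mul_mul_mul_comm, inv_sqrt_two_mul_self]

lemma bellVec_unit (a b : Fin 2) : star (bellVec a b) ⬝ᵥ bellVec a b = 1 := by
  rw [star_bellVec]
  simp only [dotProduct, bellVec_mul_bellVec, Fintype.sum_prod_type, Fin.sum_univ_two]
  fin_cases a <;> fin_cases b <;> norm_num [bitSign, show (1 + 1 : Fin 2) = 0 from rfl]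

/-- The Bell projectors in the Pauli basis. -/
lemma vecMulVec_bellVec (a b : Fin 2) :
    vecMulVec (bellVec a b) (star (bellVec a b)) = (1 / 4 : ℂ) •
      (1 + bitSign a • (qubitX ⊗ₖ qubitX) + bitSign b • (qubitZ ⊗ₖ qubitZ) +
        (bitSign a * bitSign b) • ((qubitX ⊗ₖ qubitX) * (qubitZ ⊗ₖ qubitZ))) := by
  rw [star_bellVec, ← mul_kronecker_mul]
  ext ⟨i, j⟩ ⟨k, l⟩
  rw [vecMulVec_apply, bellVec_mul_bellVec]
  fin_cases a <;> fin_cases b <;> fin_cases i <;> fin_cases j <;> fin_cases k <;> fin_cases l <;>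
    norm_num [bitSign, qubitX, qubitZ, kroneckerMap_apply, Matrix.one_apply,
      show (1 + 1 : Fin 2) = 0 from rfl]

/-- The uniform mixture of two copies of the same Bell projector is the Smolin state. -/
lemma sum_bell_kronecker_bell :
    ∑ a, ∑ b, (1 / 4 : ℂ) • (vecMulVec (bellVec a b) (star (bellVec a b)) ⊗ₖ
      vecMulVec (bellVec a b) (star (bellVec a b))) =
    (1 / 16 : ℂ) • ((1 + (qubitX ⊗ₖ qubitX) ⊗ₖ (qubitX ⊗ₖ qubitX)) *
      (1 + (qubitZ ⊗ₖ qubitZ) ⊗ₖ (qubitZ ⊗ₖ qubitZ))) := by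
  have hmul := mul_kronecker_mul (qubitX ⊗ₖ qubitX) (qubitZ ⊗ₖ qubitZ)
    (qubitX ⊗ₖ qubitX) (qubitZ ⊗ₖ qubitZ)
  simp only [mul_add, add_mul, one_mul, mul_one, ← hmul, vecMulVec_bellVec]
  rw [← one_kronecker_one (α := ℂ) (m := Fin 2 × Fin 2) (n := Fin 2 × Fin 2)]
  generalize (qubitX ⊗ₖ qubitX) * (qubitZ ⊗ₖ qubitZ) = Y
  generalize qubitX ⊗ₖ qubitX = X
  generalize qubitZ ⊗ₖ qubitZ = Z
  simp only [Fin.sum_univ_two, bitSign, Fin.val_zero, Fin.val_one, pow_zero, pow_one,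
    add_kronecker, kronecker_add, smul_kronecker, kronecker_smul]
  module

/-- The four-qubit Smolin state `ρ⁽⁴⁾ = (1/16)(I + X⊗X⊗X⊗X)(I + Z⊗Z⊗Z⊗Z)` is separable
with respect to the 2:2 partition `{1,2} : {3,4}`: it is a finite convex combination of
tensor products of rank-one density matrices `|u⟩⟨u| ⊗ |v⟩⟨v|` with `u, v` unit vectors. -/
theorem smolin_separable_12_34
    (ρ : Matrix ((Fin 2 × Fin 2) × (Fin 2 × Fin 2)) ((Fin 2 × Fin 2) × (Fin 2 × Fin 2)) ℂ)
    (hρ : ρ = (1 / 16 : ℂ) •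
        ((1 + (qubitX ⊗ₖ qubitX) ⊗ₖ (qubitX ⊗ₖ qubitX)) *
          (1 + (qubitZ ⊗ₖ qubitZ) ⊗ₖ (qubitZ ⊗ₖ qubitZ)))) :
    ∃ (m : ℕ) (p : Fin m → ℝ) (u v : Fin m → (Fin 2 × Fin 2 → ℂ)),
      (∀ t, 0 < p t) ∧ (∑ t, p t = 1) ∧
      (∀ t, star (u t) ⬝ᵥ u t = 1) ∧ (∀ t, star (v t) ⬝ᵥ v t = 1) ∧
      ρ = ∑ t, (p t : ℂ) •
        (vecMulVec (u t) (star (u t)) ⊗ₖ vecMulVec (v t) (star (v t))) := by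
  let e : Fin 4 ≃ Fin 2 × Fin 2 := (finProdFinEquiv (m := 2) (n := 2)).symm
  refine ⟨4, fun _ => 1 / 4, fun t => bellVec (e t).1 (e t).2, fun t => bellVec (e t).1 (e t).2,
    fun _ => by norm_num, by norm_num, fun _ => bellVec_unit _ _, fun _ => bellVec_unit _ _, ?_⟩
  rw [hρ, ← sum_bell_kronecker_bell, ← Fintype.sum_prod_type', ← e.sum_comp]
  norm_num
end
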